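/- Let S and Q be separated C-structures, Rules a rule system over (ι, κ), and GS : κ → Set S, GQ : κ → Set Q prior interpretations each corresponding to the same GA : κ → Set P.M. Let ΦS and ΦQ be the operators induced by Rules relative to S with GS and to Q with GQ respectively. If a hyper-term t is a decomposition of a ∈ S and also a decomposition of b ∈ Q, then for every i : ι, a ∈ (lfp ΦS) i if and only if b ∈ (lfp ΦQ) i. -/

import Mathlib

open PFunctor

/-- The polynomial functor of a constructor vocabulary `C` with arities `arity`.
Hyper-terms over `C` are the elements of `(PF C arity).M`. -/
def PF (C : Type) (arity : C → ℕ) : PFunctor := ⟨C, fun c => Fin (arity c)⟩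

/-- A `C`-structure `interp` on `S` is *separated* if each constructor is interpreted
injectively and distinct constructors have disjoint ranges. -/
def Separated {C : Type} {arity : C → ℕ} {S : Type*}
    (interp : ∀ c : C, (Fin (arity c) → S) → S) : Prop :=
  (∀ c, Function.Injective (interp c)) ∧
    ∀ c d, c ≠ d → Disjoint (Set.range (interp c)) (Set.range (interp d))

/-- A decomposition relation between hyper-terms and elements of a `C`-structure. -/
def IsDecompRel {C : Type} {arity : C → ℕ} {S : Type*}
    (interp : ∀ c : C, (Fin (arity c) → S) → S)
    (R : (PF C arity).M → S → Prop) : Prop :=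
  ∀ t a, R t a → ∃ (c : C) (f : Fin (arity c) → (PF C arity).M) (b : Fin (arity c) → S),
    t = PFunctor.M.mk ⟨c, f⟩ ∧ a = interp c b ∧ ∀ i, R (f i) (b i)

/-- A hyper-term `t` is a decomposition of `a : S` if `R t a` for some
decomposition relation `R`. -/
def IsDecomposition {C : Type} {arity : C → ℕ} {S : Type*}
    (interp : ∀ c : C, (Fin (arity c) → S) → S)
    (t : (PF C arity).M) (a : S) : Prop :=
  ∃ R, IsDecompRel interp R ∧ R t a

/-- The canonical `C`-structure on hyper-terms. -/
def mkA {C : Type} {arity : C → ℕ} (c : C) (f : Fin (arity c) → (PF C arity).M) :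
    (PF C arity).M :=
  PFunctor.M.mk ⟨c, f⟩

/-- The monotone operator on `ι → Set S` induced by a rule system `Rules` relative to
a `C`-structure `interp` on `S` and prior interpretations `G : κ → Set S`. -/
def ruleOp {C : Type} {arity : C → ℕ} {S : Type*} {ι κ : Type*}
    (interp : ∀ c : C, (Fin (arity c) → S) → S)
    (Rules : Set (Σ _ : ι, Σ c : C, Fin (arity c) → ι ⊕ κ))
    (G : κ → Set S) : (ι → Set S) →o (ι → Set S) where
  toFun X i :=
    {a | ∃ r ∈ Rules, r.1 = i ∧ ∃ b : Fin (arity r.2.1) → S,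
      a = interp r.2.1 b ∧ ∀ j,
        (∀ i', r.2.2 j = Sum.inl i' → b j ∈ X i') ∧
        (∀ k, r.2.2 j = Sum.inr k → b j ∈ G k)}
  monotone' := by
    intro X Y hXY i a ha
    obtain ⟨r, hr, hi, b, hab, hj⟩ := ha
    exact ⟨r, hr, hi, b, hab, fun j =>
      ⟨fun i' h => hXY i' ((hj j).1 i' h), (hj j).2⟩⟩

/-- Prior interpretations `GS` on `S` and `GA` on hyper-terms correspond. -/
def Corresponds {C : Type} {arity : C → ℕ} {S : Type*} {κ : Type*}
    (interp : ∀ c : C, (Fin (arity c) → S) → S)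
    (GS : κ → Set S) (GA : κ → Set (PF C arity).M) : Prop :=
  (∀ k, ∀ a ∈ GS k, ∃ t, IsDecomposition interp t a ∧ t ∈ GA k) ∧
  (∀ k (t : (PF C arity).M) (a : S), t ∈ GA k → IsDecomposition interp t a → a ∈ GS k)

/-!
If `t` is a decomposition of `a`, then `a` and `t` have the same inductive types, the types of `t`
being computed in the structure `mkA` on hyper-terms. Two elements with the common decomposition
`t` are therefore both compared with `t`. For one such comparison, "is a decomposition of" is a
simulation in both directions: from hyper-terms to `S` because constructors of hyper-terms are free,
and from `S` to hyper-terms because `S` is separated. Membership in a least fixed point is carried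
along simulations by fixed-point induction.
-/

section

variable {C : Type} {arity : C → ℕ} {S Q ι κ : Type*}
  {interp : ∀ c : C, (Fin (arity c) → S) → S} {interpQ : ∀ c : C, (Fin (arity c) → Q) → Q}
  {Rules : Set (Σ _ : ι, Σ c : C, Fin (arity c) → ι ⊕ κ)}
  {GS : κ → Set S} {GQ : κ → Set Q} {GA : κ → Set (PF C arity).M}

theorem Separated.sigma_injective (hsep : Separated interp) :
    Function.Injective fun p : Σ c, Fin (arity c) → S => interp p.1 p.2 := by
  rintro ⟨c, x⟩ ⟨d, y⟩ hxy
  obtain rfl | hcd := eq_or_ne c d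
  · exact congrArg (Sigma.mk c) (hsep.1 c hxy)
  · exact absurd hxy ((hsep.2 c d hcd).ne_of_mem ⟨x, rfl⟩ ⟨y, rfl⟩)

theorem mkA_sigma_injective :
    Function.Injective fun p : Σ c, Fin (arity c) → (PF C arity).M => mkA p.1 p.2 :=
  fun _ _ h => PFunctor.M.mk_inj h

/-- A simulation between `C`-structures: whenever `R a b` holds, each way of writing `a` as a
constructor applied to arguments is matched by `b` with the same constructor and `R`-related
arguments. It is the one-sided condition under which inductive types pass from `a` to `b`. -/
def IsSimulation (interp : ∀ c : C, (Fin (arity c) → S) → S)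
    (interpQ : ∀ c : C, (Fin (arity c) → Q) → Q) (R : S → Q → Prop) : Prop :=
  ∀ c x b, R (interp c x) b → ∃ y, b = interpQ c y ∧ ∀ j, R (x j) (y j)

theorem IsSimulation.mem_lfp_ruleOp {R : S → Q → Prop} (hR : IsSimulation interp interpQ R)
    (hG : ∀ k a b, R a b → a ∈ GS k → b ∈ GQ k) {a : S} {b : Q} (hab : R a b) {i : ι}
    (ha : a ∈ OrderHom.lfp (ruleOp interp Rules GS) i) :
    b ∈ OrderHom.lfp (ruleOp interpQ Rules GQ) i := by
  suffices hle : OrderHom.lfp (ruleOp interp Rules GS) ≤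
      fun i => {a | ∀ b, R a b → b ∈ OrderHom.lfp (ruleOp interpQ Rules GQ) i} from
    hle i ha b hab
  apply OrderHom.lfp_le
  rintro i _ ⟨r, hr, hri, x, rfl, hx⟩ b hab
  obtain ⟨y, rfl, hxy⟩ := hR _ x b hab
  rw [← OrderHom.map_lfp]
  exact ⟨r, hr, hri, y, rfl, fun j =>
    ⟨fun i' hj => (hx j).1 i' hj _ (hxy j), fun k hj => hG k _ _ (hxy j) ((hx j).2 k hj)⟩⟩

theorem isDecompRel_isDecomposition : IsDecompRel interp (IsDecomposition interp) := by
  rintro t a ⟨R, hR, hta⟩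
  obtain ⟨c, f, x, ht, ha, hfx⟩ := hR t a hta
  exact ⟨c, f, x, ht, ha, fun j => ⟨R, hR, hfx j⟩⟩

theorem isSimulation_isDecomposition : IsSimulation mkA interp (IsDecomposition interp) := by
  intro c f a h
  obtain ⟨d, g, x, hfg, rfl, hgx⟩ := isDecompRel_isDecomposition _ _ h
  cases mkA_sigma_injective (a₁ := ⟨c, f⟩) (a₂ := ⟨d, g⟩) hfg
  exact ⟨x, rfl, hgx⟩

theorem Separated.isSimulation_flip_isDecomposition (hsep : Separated interp) :
    IsSimulation interp mkA (flip (IsDecomposition interp)) := by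
  intro c x t h
  obtain ⟨d, f, y, rfl, hxy, hfy⟩ := isDecompRel_isDecomposition _ _ h
  cases hsep.sigma_injective (a₁ := ⟨c, x⟩) (a₂ := ⟨d, y⟩) hxy
  exact ⟨f, rfl, hfy⟩

theorem IsDecomposition.unique (hsep : Separated interp) {t t' : (PF C arity).M} {a : S}
    (h : IsDecomposition interp t a) (h' : IsDecomposition interp t' a) : t = t' := by
  refine PFunctor.M.bisim
    (fun t t' => ∃ a, IsDecomposition interp t a ∧ IsDecomposition interp t' a)
    ?_ t t' ⟨a, h, h'⟩
  rintro t t' ⟨a, h, h'⟩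
  obtain ⟨c, f, x, rfl, rfl, hfx⟩ := isDecompRel_isDecomposition _ _ h
  obtain ⟨f', rfl, hfx'⟩ := hsep.isSimulation_flip_isDecomposition c x t' h'
  exact ⟨c, f, f', PFunctor.M.dest_mk _, PFunctor.M.dest_mk _, fun j => ⟨x j, hfx j, hfx' j⟩⟩

theorem Corresponds.mem_iff (hcorr : Corresponds interp GS GA) (hsep : Separated interp)
    {t : (PF C arity).M} {a : S} (h : IsDecomposition interp t a) {k : κ} :
    a ∈ GS k ↔ t ∈ GA k := by
  refine ⟨fun ha => ?_, fun ht => hcorr.2 k t a ht h⟩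
  obtain ⟨t', ht'a, ht'⟩ := hcorr.1 k a ha
  rwa [h.unique hsep ht'a]

theorem Corresponds.mem_lfp_ruleOp_iff (hcorr : Corresponds interp GS GA)
    (hsep : Separated interp) {t : (PF C arity).M} {a : S} (h : IsDecomposition interp t a)
    {i : ι} :
    a ∈ OrderHom.lfp (ruleOp interp Rules GS) i ↔ t ∈ OrderHom.lfp (ruleOp mkA Rules GA) i :=
  ⟨hsep.isSimulation_flip_isDecomposition.mem_lfp_ruleOp
      (fun _ _ _ hta => (hcorr.mem_iff hsep hta).1) h,
    isSimulation_isDecomposition.mem_lfp_ruleOp (fun k t a hta ht => hcorr.2 k t a ht hta) h⟩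

theorem lfp_mem_iff_of_common_decomposition_general
    (hsepS : Separated interp) (hsepQ : Separated interpQ)
    (hcorrS : Corresponds interp GS GA) (hcorrQ : Corresponds interpQ GQ GA)
    {t : (PF C arity).M} {a : S} {b : Q}
    (ha : IsDecomposition interp t a) (hb : IsDecomposition interpQ t b) (i : ι) :
    a ∈ OrderHom.lfp (ruleOp interp Rules GS) i ↔
      b ∈ OrderHom.lfp (ruleOp interpQ Rules GQ) i :=
  (hcorrS.mem_lfp_ruleOp_iff hsepS ha).trans (hcorrQ.mem_lfp_ruleOp_iff hsepQ hb).symm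

end

/-- Corollary (inductive case): elements of two separated `D`-correct structures with a
common decomposition have the same inductive types. -/
theorem lfp_mem_iff_of_common_decomposition {C : Type} [Fintype C] {arity : C → ℕ}
    {S Q : Type*} {ι κ : Type*}
    (interpS : ∀ c : C, (Fin (arity c) → S) → S) (hsepS : Separated interpS)
    (interpQ : ∀ c : C, (Fin (arity c) → Q) → Q) (hsepQ : Separated interpQ)
    (Rules : Set (Σ _ : ι, Σ c : C, Fin (arity c) → ι ⊕ κ))
    (GS : κ → Set S) (GQ : κ → Set Q) (GA : κ → Set (PF C arity).M)
    (hcorrS : Corresponds interpS GS GA) (hcorrQ : Corresponds interpQ GQ GA)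
    (t : (PF C arity).M) (a : S) (b : Q)
    (ha : IsDecomposition interpS t a) (hb : IsDecomposition interpQ t b) :
    ∀ i : ι, a ∈ OrderHom.lfp (ruleOp interpS Rules GS) i ↔
      b ∈ OrderHom.lfp (ruleOp interpQ Rules GQ) i := by
  exact lfp_mem_iff_of_common_decomposition_general hsepS hsepQ hcorrS hcorrQ ha hb
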